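/- arXiv:2605.30813 — 2 statements merged into one kernel-verified Lean document; each statement's English description precedes it below -/
import Mathlib

section
/- Mutual exclusion among siblings: for a non-atomic canonical token t, define the candidate set 𝒞_t as the set of canonical tokens w such that pre(t) ∈ P(w) and, whenever w ≠ pre(t), the canonical rule of t has strictly higher priority than the canonical rule of the unique child of pre(t) lying on the ancestor path from w to pre(t). Let k be a canonical token and let u ≠ v be two distinct non-atomic nodes of SufSucTree(k) with suc(u) = suc(v) (siblings in the tree). Then 𝒞_u ∩ 𝒞_v = ∅. -/
/-!
Common BPE formalization preamble.

A token is a (nonempty) string over the alphabet `α`, modeled as `List α`.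
A merge rule is a pair of tokens; a dictionary is an ordered list of rules
(earlier rules have strictly higher priority).
-/

namespace BPE

variable {α : Type*} [DecidableEq α]

/-- A token is a string over the alphabet (nonemptiness is imposed by hypotheses). -/
abbrev Token (α : Type*) := List α

/-- A merge rule is an ordered pair of tokens. -/
abbrev Rule (α : Type*) := Token α × Token α

/-- A dictionary is an ordered list of merge rules; earlier = higher priority. -/
abbrev Dict (α : Type*) := List (Rule α)

/-- Apply a single merge rule to a token list, scanning left to right and replacing
each adjacent occurrence of `r.1` followed by `r.2` by the concatenated token,
resuming the scan after the newly formed token (no overlaps). -/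
def applyRule (r : Rule α) : List (Token α) → List (Token α)
  | [] => []
  | [t] => [t]
  | t :: u :: rest =>
      if t = r.1 ∧ u = r.2 then (r.1 ++ r.2) :: applyRule r rest
      else t :: applyRule r (u :: rest)

/-- `φ₀(s)`: the list of single-character tokens of `s`. -/
def phi0 (s : List α) : List (Token α) := s.map (fun c => [c])

/-- `φ_k(s)`: the token list after applying the first `k` rules of `D` to `s`. -/
def phiK (D : Dict α) (k : ℕ) (s : List α) : List (Token α) :=
  (D.take k).foldl (fun φ r => applyRule r φ) (phi0 s)

/-- The BPE tokenization `𝕋_D(s)`. -/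
def tokenize (D : Dict α) (s : List α) : List (Token α) :=
  phiK D D.length s

/-- Detokenization `π`: concatenation of the tokens. -/
def detok (φ : List (Token α)) : List α := φ.flatten

/-- A dictionary is valid if all rule components are genuine (nonempty) tokens. -/
def ValidDict (D : Dict α) : Prop := ∀ r ∈ D, r.1 ≠ [] ∧ r.2 ≠ []

/-- A token `t` is canonical if `𝕋_D(t) = [t]`. -/
def IsCanonical (D : Dict α) (t : Token α) : Prop := tokenize D t = [t]

/-- The last token `θ(s)`: last element of `𝕋_D(s)` (defaulting to `[]`). -/
def theta (D : Dict α) (s : List α) : Token α := (tokenize D s).getLastD []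

/-- `j` (0-based) is the index of the canonical rule of `t`:
`φ_j(t)` has exactly two tokens and `φ_{j+1}(t) = [t]`. -/
def IsCanonicalRuleIdx (D : Dict α) (t : Token α) (j : ℕ) : Prop :=
  j < D.length ∧ (phiK D j t).length = 2 ∧ phiK D (j + 1) t = [t]

open Classical in
/-- The (0-based) index of the canonical rule of `t` (junk value `0` if none exists). -/
noncomputable def canonIdx (D : Dict α) (t : Token α) : ℕ :=
  if h : ∃ j, IsCanonicalRuleIdx D t j then h.choose else 0

/-- Predecessor `pre(t)`: first token of the two-token stage `φ_{j-1}(t)`. -/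
noncomputable def pre (D : Dict α) (t : Token α) : Token α :=
  (phiK D (canonIdx D t) t).headD []

/-- Successor `suc(t)`: second token of the two-token stage `φ_{j-1}(t)`. -/
noncomputable def suc (D : Dict α) (t : Token α) : Token α :=
  (phiK D (canonIdx D t) t).getLastD []

/-- `InPath D x a` means `a ∈ P(x)`: `a` is obtained from `x` by iterating `suc`,
i.e. `a` lies on the ancestor path of `x` in the Successor Forest. -/
def InPath (D : Dict α) (x a : Token α) : Prop :=
  ∃ n : ℕ, (suc D)^[n] x = a

/-- `s` with the suffix `u` removed. -/
def dropSuffix (s u : List α) : List α := s.take (s.length - u.length)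

/-- The Prefix Last-Token Condition of the canonical suffix token `t`
with respect to the string `s`. Atomic tokens satisfy it by definition;
a non-atomic token must satisfy Reachability and Priority dominance. -/
def PLTC (D : Dict α) (s t : Token α) : Prop :=
  t.length = 1 ∨
    (1 < t.length ∧
      InPath D (theta D (dropSuffix s (suc D t))) (pre D t) ∧
      (theta D (dropSuffix s (suc D t)) ≠ pre D t →
        ∀ u : Token α, 1 < u.length → IsCanonical D u → suc D u = pre D t →
          InPath D (theta D (dropSuffix s (suc D t))) u →
          canonIdx D t < canonIdx D u))


/-- The candidate set `𝒞_t` of a non-atomic canonical token `t`: canonical tokens `w`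
such that `pre t ∈ P(w)`, and whenever `w ≠ pre t`, the canonical rule of `t` has
strictly higher priority than the canonical rule of the unique child of `pre t`
lying on the ancestor path from `w` to `pre t`. -/
def CandSet (D : Dict α) (t : Token α) : Set (Token α) :=
  {w | IsCanonical D w ∧ InPath D w (pre D t) ∧
    (w ≠ pre D t →
      ∀ u : Token α, 1 < u.length → IsCanonical D u → suc D u = pre D t →
        InPath D w u → canonIdx D t < canonIdx D u)}

/-!
Suppose `w` lies in both `𝒞_u` and `𝒞_v`, and write `y = suc u = suc v`. Both predecessors lie on
the single path `P(w)`, so up to symmetry `pre u ∈ P(pre v)`, and `pre u ≠ pre v` since `u ≠ v`.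
Let `c` be the child of `pre u` on the path from `pre v` to `pre u`; membership `w ∈ 𝒞_u` makes the
rule of `u` precede that of `c`. Immediately after the rule of `u` is applied, `c` is therefore not
yet assembled, so the tokenization of `pre v` ends in `pre u` and that of `v = pre v · y` ends in
the adjacent pair `pre u, y`. But this is the pair which the rule of `u` has just merged everywhere.
-/

section ApplyRule

variable {r : Rule α} {X : List (Token α)}

theorem flatten_applyRule (r : Rule α) (X : List (Token α)) :
    (applyRule r X).flatten = X.flatten := by
  fun_induction applyRule r X with
  | case1 => rfl
  | case2 => rfl
  | case3 t u rest hfire ih => simp [ih, hfire]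
  | case4 t u rest _ ih => simp [ih]

theorem length_le_two_mul_length_applyRule (r : Rule α) (X : List (Token α)) :
    X.length ≤ 2 * (applyRule r X).length := by
  fun_induction applyRule r X <;> simp only [List.length_cons, List.length_nil] at * <;> omega

theorem exists_append_of_applyRule_eq_append {A B : List (Token α)}
    (h : applyRule r X = A ++ B) :
    ∃ A' B', X = A' ++ B' ∧ applyRule r A' = A ∧ applyRule r B' = B := by
  rcases A with _ | ⟨a, A⟩
  · exact ⟨[], X, rfl, by rw [applyRule], h⟩
  fun_induction applyRule r X generalizing a A with
  | case1 => simp at h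
  | case2 t =>
    obtain ⟨rfl, rfl, rfl⟩ : t = a ∧ A = [] ∧ B = [] := by simpa using h
    exact ⟨[t], [], rfl, by rw [applyRule], by rw [applyRule]⟩
  | case3 t u rest hfire ih =>
    obtain ⟨rfl, htail⟩ := List.cons.inj h
    rcases A with _ | ⟨b, A⟩
    · exact ⟨[t, u], rest, rfl, by simp [applyRule, hfire], htail⟩
    obtain ⟨A', B', rfl, hA, hB⟩ := ih b A htail
    exact ⟨t :: u :: A', B', rfl, by rw [applyRule, if_pos hfire, hA], hB⟩
  | case4 t u rest hfire ih =>
    obtain ⟨rfl, htail⟩ := List.cons.inj h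
    rcases A with _ | ⟨b, A⟩
    · exact ⟨[t], u :: rest, rfl, by rw [applyRule], htail⟩
    obtain ⟨_ | ⟨a', A'⟩, B', hX, hA, hB⟩ := ih b A htail
    · simp [applyRule] at hA
    obtain ⟨rfl, rfl⟩ := List.cons.inj hX
    exact ⟨t :: u :: A', B', rfl, by rw [applyRule, if_neg hfire, hA], hB⟩

theorem head?_eq_of_head?_applyRule_eq_snd (h₁ : r.1 ≠ [])
    (h : (applyRule r X).head? = some r.2) : X.head? = some r.2 := by
  fun_cases applyRule r X with
  | case1 => simp [applyRule] at h
  | case2 t => simpa [applyRule] using h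
  | case3 t u rest hfire => simp [applyRule, hfire, h₁] at h
  | case4 t u rest hfire => simpa [applyRule, hfire] using h

theorem not_infix_applyRule (h₁ : r.1 ≠ []) (h₂ : r.2 ≠ []) (X : List (Token α)) :
    ¬ [r.1, r.2] <:+: applyRule r X := by
  fun_induction applyRule r X with
  | case1 => simp
  | case2 t => exact fun h => by simpa using h.length_le
  | case3 t u rest _ ih =>
    rw [List.infix_cons_iff]
    rintro (h | h)
    · exact h₂ (by simpa using (List.cons_prefix_cons.mp h).1)
    · exact ih h
  | case4 t u rest hfire ih =>
    rw [List.infix_cons_iff]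
    rintro (h | h)
    · obtain ⟨rfl, W, hW⟩ := List.cons_prefix_cons.mp h
      have hu : (u :: rest).head? = some r.2 :=
        head?_eq_of_head?_applyRule_eq_snd h₁ (by rw [← hW]; rfl)
      exact hfire ⟨rfl, by simpa using hu⟩
    · exact ih h

theorem eq_of_applyRule_pair_eq_singleton {x y t : Token α} (h : applyRule r [x, y] = [t]) :
    r = (x, y) := by
  by_cases hfire : x = r.1 ∧ y = r.2
  · exact Prod.ext hfire.1.symm hfire.2.symm
  · simp [applyRule, hfire] at h

end ApplyRule

section ApplyRules

/-- Successive application of the rules of `R`, in order, to an arbitrary token list. It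
generalizes `phiK` to runs starting from an intermediate tokenization. -/
def applyRules (R : List (Rule α)) (X : List (Token α)) : List (Token α) :=
  R.foldl (fun φ r => applyRule r φ) X

theorem flatten_applyRules (R : List (Rule α)) (X : List (Token α)) :
    (applyRules R X).flatten = X.flatten := by
  induction R generalizing X with
  | nil => rfl
  | cons r R ih => exact (ih _).trans (flatten_applyRule r X)

theorem applyRules_singleton (R : List (Rule α)) (x : Token α) : applyRules R [x] = [x] :=
  List.foldl_fixed' (fun _ => by rw [applyRule]) R

theorem exists_append_of_applyRules_eq_append {R : List (Rule α)} {X A B : List (Token α)}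
    (h : applyRules R X = A ++ B) :
    ∃ A' B', X = A' ++ B' ∧ applyRules R A' = A ∧ applyRules R B' = B := by
  induction R generalizing X with
  | nil => exact ⟨A, B, h, rfl, rfl⟩
  | cons r R ih =>
    obtain ⟨A₁, B₁, hX, hA, hB⟩ := ih h
    obtain ⟨A', B', rfl, rfl, rfl⟩ := exists_append_of_applyRule_eq_append hX
    exact ⟨A', B', rfl, hA, hB⟩

end ApplyRules

section PhiK

variable {D : Dict α} {i j : ℕ} {s : List α}

theorem flatten_phi0 {β : Type*} (s : List β) : (phi0 s).flatten = s := by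
  simp [phi0, ← List.flatMap_def]

theorem phi0_flatten_of_phi0_eq_append {β : Type*} {s : List β} {A B : List (Token β)}
    (h : phi0 s = A ++ B) :
    phi0 A.flatten = A ∧ phi0 B.flatten = B := by
  obtain ⟨s₁, s₂, rfl, rfl, rfl⟩ := List.map_eq_append_iff.mp h
  exact ⟨congrArg phi0 (flatten_phi0 s₁), congrArg phi0 (flatten_phi0 s₂)⟩

theorem flatten_phiK (D : Dict α) (j : ℕ) (s : List α) : (phiK D j s).flatten = s :=
  (flatten_applyRules _ _).trans (flatten_phi0 s)

theorem phiK_succ (hj : j < D.length) (s : List α) :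
    phiK D (j + 1) s = applyRule D[j] (phiK D j s) := by
  rw [phiK, List.take_add_one, List.getElem?_eq_getElem hj, List.foldl_append]
  rfl

theorem phiK_eq_applyRules_of_le (hij : i ≤ j) (s : List α) :
    phiK D j s = applyRules ((D.take j).drop i) (phiK D i s) := by
  unfold phiK applyRules
  rw [← List.foldl_append, ← min_eq_left hij, ← List.take_take, min_eq_left hij,
    List.take_append_drop]

theorem phiK_eq_singleton_of_le {x : Token α} (h : phiK D i s = [x]) (hij : i ≤ j) :
    phiK D j s = [x] := by
  rw [phiK_eq_applyRules_of_le hij, h, applyRules_singleton]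

theorem phiK_flatten_of_phiK_eq_append {A B : List (Token α)} (h : phiK D j s = A ++ B) :
    phiK D j A.flatten = A ∧ phiK D j B.flatten = B := by
  obtain ⟨A₀, B₀, hs, rfl, rfl⟩ := exists_append_of_applyRules_eq_append h
  obtain ⟨hA, hB⟩ := phi0_flatten_of_phi0_eq_append hs
  constructor
  · rw [flatten_applyRules, phiK, hA, applyRules]
  · rw [flatten_applyRules, phiK, hB, applyRules]

/-- A token boundary present at stage `j` was never crossed by an earlier merge. -/
theorem phiK_eq_append_of_le {A B : List (Token α)} (h : phiK D j s = A ++ B) (hij : i ≤ j) :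
    phiK D i s = phiK D i A.flatten ++ phiK D i B.flatten := by
  rw [phiK_eq_applyRules_of_le hij] at h
  obtain ⟨A', B', hs, rfl, rfl⟩ := exists_append_of_applyRules_eq_append h
  obtain ⟨hA, hB⟩ := phiK_flatten_of_phiK_eq_append hs
  rw [flatten_applyRules, flatten_applyRules, hA, hB, hs]

end PhiK

section CanonicalRule

variable {D : Dict α} {t : Token α}

theorem exists_isCanonicalRuleIdx (ht : IsCanonical D t) (hl : 1 < t.length) :
    ∃ j, IsCanonicalRuleIdx D t j := by
  classical
  have hex : ∃ j, phiK D j t = [t] := ⟨D.length, ht⟩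
  have hle : Nat.find hex ≤ D.length := Nat.find_min' hex ht
  have hspec := Nat.find_spec hex
  obtain ⟨j, hj⟩ : ∃ j, Nat.find hex = j + 1 := by
    refine Nat.exists_eq_succ_of_ne_zero fun h0 => ?_
    have hlen : (phi0 t).length = 1 := congrArg List.length (h0 ▸ hspec)
    rw [phi0, List.length_map] at hlen
    omega
  have hmin : phiK D j t ≠ [t] := Nat.find_min hex (by omega)
  rw [hj] at hle hspec
  have hupper : (phiK D j t).length ≤ 2 := by
    simpa [← phiK_succ hle, hspec] using length_le_two_mul_length_applyRule D[j] (phiK D j t)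
  have hflat := flatten_phiK D j t
  have hlower : 1 < (phiK D j t).length := by
    rcases hX : phiK D j t with _ | ⟨x, _ | ⟨y, X⟩⟩
    · rw [hX] at hflat
      simp [← hflat] at hl
    · rw [hX] at hflat hmin
      exact absurd (by simpa using hflat) hmin
    · simp
  exact ⟨j, hle, by omega, hspec⟩

theorem isCanonicalRuleIdx_canonIdx (ht : IsCanonical D t) (hl : 1 < t.length) :
    IsCanonicalRuleIdx D t (canonIdx D t) := by
  have hex := exists_isCanonicalRuleIdx ht hl
  rw [canonIdx, dif_pos hex]
  exact hex.choose_spec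

theorem canonIdx_lt_length (ht : IsCanonical D t) (hl : 1 < t.length) :
    canonIdx D t < D.length :=
  (isCanonicalRuleIdx_canonIdx ht hl).1

theorem phiK_canonIdx (ht : IsCanonical D t) (hl : 1 < t.length) :
    phiK D (canonIdx D t) t = [pre D t, suc D t] := by
  obtain ⟨x, y, hxy⟩ := List.length_eq_two.mp (isCanonicalRuleIdx_canonIdx ht hl).2.1
  simp [pre, suc, hxy]

theorem pre_append_suc (ht : IsCanonical D t) (hl : 1 < t.length) : pre D t ++ suc D t = t := by
  simpa [phiK_canonIdx ht hl] using flatten_phiK D (canonIdx D t) t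

theorem phiK_canonIdx_pre (ht : IsCanonical D t) (hl : 1 < t.length) :
    phiK D (canonIdx D t) (pre D t) = [pre D t] := by
  simpa using (phiK_flatten_of_phiK_eq_append (A := [pre D t]) (phiK_canonIdx ht hl)).1

theorem phiK_canonIdx_suc (ht : IsCanonical D t) (hl : 1 < t.length) :
    phiK D (canonIdx D t) (suc D t) = [suc D t] := by
  simpa using (phiK_flatten_of_phiK_eq_append (A := [pre D t]) (phiK_canonIdx ht hl)).2

theorem phiK_eq_pre_append_suc (ht : IsCanonical D t) (hl : 1 < t.length) {i : ℕ}
    (hi : i ≤ canonIdx D t) : phiK D i t = phiK D i (pre D t) ++ phiK D i (suc D t) := by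
  simpa using phiK_eq_append_of_le (A := [pre D t]) (phiK_canonIdx ht hl) hi

theorem isCanonical_pre (ht : IsCanonical D t) (hl : 1 < t.length) : IsCanonical D (pre D t) :=
  phiK_eq_singleton_of_le (phiK_canonIdx_pre ht hl) (canonIdx_lt_length ht hl).le

theorem getElem_canonIdx (ht : IsCanonical D t) (hl : 1 < t.length) :
    D[canonIdx D t]'(canonIdx_lt_length ht hl) = (pre D t, suc D t) := by
  have hmerge := (isCanonicalRuleIdx_canonIdx ht hl).2.2
  rw [phiK_succ (canonIdx_lt_length ht hl), phiK_canonIdx ht hl] at hmerge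
  exact eq_of_applyRule_pair_eq_singleton hmerge

theorem not_infix_phiK_canonIdx_succ (hD : ValidDict D) (ht : IsCanonical D t)
    (hl : 1 < t.length) (s : List α) :
    ¬ [pre D t, suc D t] <:+: phiK D (canonIdx D t + 1) s := by
  have hlt := canonIdx_lt_length ht hl
  have hrule := getElem_canonIdx ht hl
  obtain ⟨hpre, hsuc⟩ := hD _ (List.getElem_mem hlt)
  simpa [phiK_succ hlt, hrule] using not_infix_applyRule hpre hsuc (phiK D (canonIdx D t) s)

end CanonicalRule

section AncestorPath

variable {D : Dict α} {t w x y a b c : Token α}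

theorem suc_suffix (D : Dict α) (t : Token α) : suc D t <:+ t := by
  have hflat := flatten_phiK D (canonIdx D t) t
  unfold suc
  rcases List.eq_nil_or_concat (phiK D (canonIdx D t) t) with h | ⟨X, x, h⟩
  · simp [h]
  · rw [h] at hflat ⊢
    exact ⟨X.flatten, by simpa using hflat⟩

theorem suc_eq_self_of_length_le_one (hl : t.length ≤ 1) : suc D t = t := by
  rcases t with _ | ⟨a, _ | ⟨b, t⟩⟩
  · exact List.suffix_nil.mp (suc_suffix D [])
  · have h : phiK D (canonIdx D [a]) [a] = [[a]] := applyRules_singleton _ _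
    simp [suc, h]
  · simp at hl

theorem isCanonical_suc (ht : IsCanonical D t) : IsCanonical D (suc D t) := by
  rcases le_or_gt t.length 1 with hl | hl
  · rwa [suc_eq_self_of_length_le_one hl]
  · exact phiK_eq_singleton_of_le (phiK_canonIdx_suc ht hl) (canonIdx_lt_length ht hl).le

theorem InPath.trans (hxy : InPath D x y) (hya : InPath D y a) : InPath D x a := by
  obtain ⟨m, rfl⟩ := hxy
  obtain ⟨n, rfl⟩ := hya
  exact ⟨n + m, Function.iterate_add_apply _ n m x⟩

theorem InPath.total (ha : InPath D w a) (hb : InPath D w b) :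
    InPath D a b ∨ InPath D b a := by
  obtain ⟨m, rfl⟩ := ha
  obtain ⟨n, rfl⟩ := hb
  rcases le_total m n with h | h
  · exact .inl ⟨n - m, by rw [← Function.iterate_add_apply, Nat.sub_add_cancel h]⟩
  · exact .inr ⟨m - n, by rw [← Function.iterate_add_apply, Nat.sub_add_cancel h]⟩

theorem InPath.suffix (h : InPath D x a) : a <:+ x := by
  obtain ⟨n, rfl⟩ := h
  induction n with
  | zero => exact List.suffix_rfl
  | succ n ih =>
    rw [Function.iterate_succ_apply']
    exact (suc_suffix D _).trans ih

theorem InPath.antisymm (hab : InPath D a b) (hba : InPath D b a) : a = b :=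
  hba.suffix.eq_of_length_le hab.suffix.length_le

theorem InPath.exists_child (hx : IsCanonical D x) (h : InPath D x a) (hne : x ≠ a) :
    ∃ c, 1 < c.length ∧ IsCanonical D c ∧ suc D c = a ∧ InPath D x c := by
  obtain ⟨n, rfl⟩ := h
  induction n generalizing x with
  | zero => exact absurd rfl hne
  | succ n ih =>
    rw [Function.iterate_succ_apply] at hne ⊢
    by_cases hstep : suc D x = (suc D)^[n] (suc D x)
    · have hl : 1 < x.length := by
        by_contra! hl
        exact hne ((suc_eq_self_of_length_le_one hl).symm.trans hstep)
      exact ⟨x, hl, hx, hstep, 0, rfl⟩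
    · obtain ⟨c, hcl, hc, hca, m, hm⟩ := ih (isCanonical_suc hx) hstep
      exact ⟨c, hcl, hc, hca, m + 1, hm⟩

theorem canonIdx_lt_of_phiK_suffix {j : ℕ} (hc : IsCanonical D c) (hcl : 1 < c.length)
    (hsuff : phiK D (canonIdx D c) c <:+ phiK D (canonIdx D c) x) (hx : phiK D j x = [x]) :
    canonIdx D c < j := by
  by_contra! hj
  rw [phiK_canonIdx hc hcl, phiK_eq_singleton_of_le hx hj] at hsuff
  simpa using hsuff.length_le

/-- Rule indices strictly increase away from the root of the forest, so no token of the path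
from `x` to `c` is assembled before `c` is. -/
theorem InPath.phiK_suffix (h : InPath D x c) (hx : IsCanonical D x) (hc : IsCanonical D c)
    (hcl : 1 < c.length) {i : ℕ} (hi : i ≤ canonIdx D c) : phiK D i c <:+ phiK D i x := by
  obtain ⟨n, rfl⟩ := h
  induction n generalizing x i with
  | zero => exact List.suffix_rfl
  | succ n ih =>
    rw [Function.iterate_succ_apply] at hc hcl hi ⊢
    rcases le_or_gt x.length 1 with hl | hl
    · rw [suc_eq_self_of_length_le_one hl] at hc hcl hi ⊢
      exact ih hx hc hcl hi
    have hsuff {i : ℕ} := ih (isCanonical_suc hx) hc hcl (i := i)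
    have hlt := canonIdx_lt_of_phiK_suffix hc hcl (hsuff le_rfl) (phiK_canonIdx_suc hx hl)
    rw [phiK_eq_pre_append_suc hx hl (hi.trans hlt.le)]
    exact (hsuff hi).trans (List.suffix_append _ _)

end AncestorPath

section Siblings

variable {D : Dict α} {u v w c : Token α}

theorem canonIdx_child_le_of_suc_eq (hD : ValidDict D)
    (hu : IsCanonical D u) (hul : 1 < u.length) (hv : IsCanonical D v) (hvl : 1 < v.length)
    (hsuc : suc D u = suc D v) (hc : IsCanonical D c) (hcl : 1 < c.length)
    (hcu : suc D c = pre D u) (hvc : InPath D (pre D v) c) :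
    canonIdx D c ≤ canonIdx D u := by
  by_contra! huc
  have hsuff {i : ℕ} := hvc.phiK_suffix (isCanonical_pre hv hvl) hc hcl (i := i)
  have hcv : canonIdx D c < canonIdx D v :=
    canonIdx_lt_of_phiK_suffix hc hcl (hsuff le_rfl) (phiK_canonIdx_pre hv hvl)
  have hpre : [pre D u] <:+ phiK D (canonIdx D u + 1) (pre D v) := by
    refine List.IsSuffix.trans ?_ (hsuff huc)
    rw [phiK_eq_pre_append_suc hc hcl huc, hcu,
      phiK_eq_singleton_of_le (phiK_canonIdx_pre hu hul) (Nat.le_succ _)]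
    exact List.suffix_append _ _
  have hpair : [pre D u, suc D u] <:+ phiK D (canonIdx D u + 1) v := by
    rw [phiK_eq_pre_append_suc hv hvl (huc.trans hcv), ← hsuc,
      phiK_eq_singleton_of_le (phiK_canonIdx_suc hu hul) (Nat.le_succ _)]
    obtain ⟨Y, hY⟩ := hpre
    exact ⟨Y, by simp [← hY]⟩
  exact not_infix_phiK_canonIdx_succ hD hu hul v hpair.isInfix

theorem pre_eq_of_mem_candSet_of_inPath (hD : ValidDict D)
    (hu : IsCanonical D u) (hul : 1 < u.length) (hv : IsCanonical D v) (hvl : 1 < v.length)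
    (hsuc : suc D u = suc D v) (hwu : w ∈ CandSet D u) (hwv : InPath D w (pre D v))
    (hvu : InPath D (pre D v) (pre D u)) : pre D u = pre D v := by
  by_contra hne
  have hw : w ≠ pre D u := by
    rintro rfl
    exact hne (hwv.antisymm hvu)
  obtain ⟨c, hcl, hc, hcu, hvc⟩ := hvu.exists_child (isCanonical_pre hv hvl) (Ne.symm hne)
  have hlt : canonIdx D u < canonIdx D c := hwu.2.2 hw c hcl hc hcu (hwv.trans hvc)
  exact hlt.not_ge (canonIdx_child_le_of_suc_eq hD hu hul hv hvl hsuc hc hcl hcu hvc)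

theorem sibling_mutual_exclusion_general (hD : ValidDict D) (huv : u ≠ v)
    (hu : IsCanonical D u) (hul : 1 < u.length) (hv : IsCanonical D v) (hvl : 1 < v.length)
    (hsuc : suc D u = suc D v) : CandSet D u ∩ CandSet D v = ∅ := by
  refine Set.eq_empty_of_forall_notMem fun w ⟨hwu, hwv⟩ => huv ?_
  have hpre : pre D u = pre D v := by
    rcases hwu.2.1.total hwv.2.1 with h | h
    · exact (pre_eq_of_mem_candSet_of_inPath hD hv hvl hu hul hsuc.symm hwv hwu.2.1 h).symm
    · exact pre_eq_of_mem_candSet_of_inPath hD hu hul hv hvl hsuc hwu hwv.2.1 h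
  rw [← pre_append_suc hu hul, hpre, hsuc, pre_append_suc hv hvl]

end Siblings

/-- **Mutual exclusion among siblings.** If `u ≠ v` are distinct non-atomic nodes of
`SufSucTree(k)` with `suc u = suc v`, then `𝒞_u ∩ 𝒞_v = ∅`. -/
theorem sibling_mutual_exclusion [Fintype α] (D : Dict α) (hD : ValidDict D)
    (k : Token α) (hkc : IsCanonical D k)
    (u v : Token α) (huv : u ≠ v)
    (hu : IsCanonical D u) (hul : 1 < u.length) (hus : u <:+ k)
    (hv : IsCanonical D v) (hvl : 1 < v.length) (hvs : v <:+ k)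
    (hsuc : suc D u = suc D v) :
    CandSet D u ∩ CandSet D v = ∅ :=
  sibling_mutual_exclusion_general hD huv hu hul hv hvl hsuc

end BPE
end

section
/- Tokenization consistency of token-wise truncation: let s be a string, let 0 ≤ k ≤ m, and suppose φ_k(s) = α ++ μ ++ β for token lists α, μ, β. Then μ = φ_k(π(μ)); that is, the isolated contiguous subsequence μ is exactly the token list obtained by applying the first k merge rules of D to the string π(μ). -/
/-!
Common BPE formalization preamble.

A token is a (nonempty) string over the alphabet `α`, modeled as `List α`.
A merge rule is a pair of tokens; a dictionary is an ordered list of rules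
(earlier rules have strictly higher priority).
-/

namespace BPE

variable {α : Type*} [DecidableEq α]

/-!
Each rule acts locally: cutting its output between two tokens cuts its input at a corresponding
place, and the rule acts on each of the two pieces separately. Pulling a contiguous piece `μ` of the
final token list back through all the rules thus gives a contiguous piece `ν` of the initial list,
from which the same rules produce `μ`. As merging does not change the underlying string, `ν` is the
list of single-character tokens of `π(μ)`.
-/

theorem applyRule_cons_of_not_isPrefix {r : Rule α} {t : Token α} {φ : List (Token α)}
    (h : ¬ [r.1, r.2] <+: t :: φ) : applyRule r (t :: φ) = t :: applyRule r φ := by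
  cases φ with
  | nil => rfl
  | cons u φ =>
    have hne : ¬ (t = r.1 ∧ u = r.2) := fun ⟨ht, hu⟩ => h ⟨φ, by simp [ht, hu]⟩
    rw [applyRule, if_neg hne]

theorem exists_append_of_applyRule_eq_append_s13 {r : Rule α} {φ x y : List (Token α)}
    (h : applyRule r φ = x ++ y) :
    ∃ x' y', φ = x' ++ y' ∧ applyRule r x' = x ∧ applyRule r y' = y := by
  fun_induction applyRule r φ generalizing x with
  | case1 =>
    obtain ⟨rfl, rfl⟩ := List.nil_eq_append_iff.mp h
    exact ⟨[], [], rfl, rfl, rfl⟩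
  | case2 t =>
    obtain ⟨rfl, rfl⟩ | ⟨rfl, rfl⟩ := List.singleton_eq_append_iff.mp h
    · exact ⟨[], [t], rfl, rfl, rfl⟩
    · exact ⟨[t], [], rfl, rfl, rfl⟩
  | case3 t u rest hmatch ih =>
    obtain ⟨rfl, rfl⟩ | ⟨x, rfl, hrest⟩ := List.cons_eq_append_iff.mp h
    · exact ⟨[], t :: u :: rest, rfl, rfl, by rw [applyRule, if_pos hmatch]⟩
    · obtain ⟨x', y', rfl, rfl, rfl⟩ := ih hrest
      exact ⟨t :: u :: x', y', rfl, by rw [applyRule, if_pos hmatch], rfl⟩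
  | case4 t u rest hnomatch ih =>
    obtain ⟨rfl, rfl⟩ | ⟨x, rfl, hrest⟩ := List.cons_eq_append_iff.mp h
    · exact ⟨[], t :: u :: rest, rfl, rfl, by rw [applyRule, if_neg hnomatch]⟩
    · obtain ⟨x', y', hsplit, rfl, rfl⟩ := ih hrest
      have hx : ¬ [r.1, r.2] <+: t :: x' := fun hp => by
        have hp' : [r.1, r.2] <+: t :: u :: rest :=
          hsplit ▸ hp.trans (List.prefix_append (t :: x') y')
        exact hnomatch (by simpa [eq_comm] using hp')
      exact ⟨t :: x', y', by rw [hsplit, List.cons_append],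
        applyRule_cons_of_not_isPrefix hx, rfl⟩

theorem exists_infix_of_infix_applyRule {r : Rule α} {φ μ : List (Token α)}
    (h : μ <:+: applyRule r φ) : ∃ ν, ν <:+: φ ∧ applyRule r ν = μ := by
  obtain ⟨a, b, hab⟩ := h
  obtain ⟨aμ', b', rfl, haμ, -⟩ := exists_append_of_applyRule_eq_append_s13 hab.symm
  obtain ⟨a', ν, rfl, -, hν⟩ := exists_append_of_applyRule_eq_append_s13 haμ
  exact ⟨ν, ⟨a', b', rfl⟩, hν⟩

theorem detok_applyRule (r : Rule α) (φ : List (Token α)) :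
    detok (applyRule r φ) = detok φ := by
  fun_induction applyRule r φ <;> simp_all [detok]

/-- The token list obtained from `φ` by applying all the rules of `D` in order. Unlike `tokenize`,
it starts from an arbitrary token list, as the induction on `D` requires. -/
def applyDict (D : Dict α) (φ : List (Token α)) : List (Token α) :=
  D.foldl (fun ψ r => applyRule r ψ) φ

theorem exists_infix_of_infix_applyDict {D : Dict α} {φ μ : List (Token α)}
    (h : μ <:+: applyDict D φ) : ∃ ν, ν <:+: φ ∧ applyDict D ν = μ := by
  induction D generalizing φ with
  | nil => exact ⟨μ, h, rfl⟩
  | cons r D ih =>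
    obtain ⟨ψ, hψ, rfl⟩ := ih h
    obtain ⟨ν, hν, rfl⟩ := exists_infix_of_infix_applyRule hψ
    exact ⟨ν, hν, rfl⟩

theorem detok_applyDict (D : Dict α) (φ : List (Token α)) :
    detok (applyDict D φ) = detok φ := by
  induction D generalizing φ with
  | nil => rfl
  | cons r D ih => exact (ih (applyRule r φ)).trans (detok_applyRule r φ)

theorem tokenize_eq_applyDict (D : Dict α) (s : List α) :
    tokenize D s = applyDict D (phi0 s) := by
  rw [tokenize, phiK, List.take_length, applyDict]

theorem phiK_eq_tokenize_take (D : Dict α) (k : ℕ) (s : List α) :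
    phiK D k s = tokenize (D.take k) s := by
  rw [tokenize, phiK, phiK, List.take_length]

theorem detok_phi0 {β : Type*} (s : List β) : detok (phi0 s) = s := by
  rw [detok, phi0, ← List.flatMap_def, List.flatMap_singleton']

theorem phi0_detok_of_infix_phi0 {β : Type*} {s : List β} {ν : List (Token β)}
    (h : ν <:+: phi0 s) : phi0 (detok ν) = ν := by
  obtain ⟨t, -, rfl⟩ := List.infix_map_iff.mp h
  exact congrArg phi0 (detok_phi0 t)

theorem truncation_consistency_general {D : Dict α} {s : List α} {μ : List (Token α)}
    (h : μ <:+: tokenize D s) : tokenize D (detok μ) = μ := by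
  rw [tokenize_eq_applyDict] at h ⊢
  obtain ⟨ν, hν, rfl⟩ := exists_infix_of_infix_applyDict h
  rw [detok_applyDict, phi0_detok_of_infix_phi0 hν]

/-- **Tokenization consistency of token-wise truncation.** If `φ_k(s) = a ++ μ ++ b`,
then `μ` is exactly the token list obtained by applying the first `k` rules of `D`
to the string `π(μ)`. -/
theorem truncation_consistency [Fintype α] (D : Dict α) (hD : ValidDict D)
    (s : List α) (k : ℕ) (hk : k ≤ D.length)
    (a μ b : List (Token α)) (h : phiK D k s = a ++ μ ++ b) :
    μ = phiK D k (detok μ) := by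
  rw [phiK_eq_tokenize_take] at h ⊢
  exact (truncation_consistency_general ⟨a, b, h.symm⟩).symm

end BPE
end
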